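/- Let C = FE + (qK + q^{−1}K^{−1})/(q − q^{−1})² ∈ Ū_q (the Casimir element), and set c_s = (q^s + q^{−s})/(q − q^{−1})². Then for all x ∈ Ū_q, all α ∈ {±1} and all 1 ≤ s ≤ p−1: χ^α_s(C x) = α c_s χ^α_s(x) and G_s(C x) = c_s G_s(x) + (χ^+_s + χ^−_{p−s})(x). Consequently, G_s(C^n) = n p c_s^{n−1} for every integer n ≥ 1. -/

import Mathlib

noncomputable section

open scoped TensorProduct

namespace Uqsl2

/-- Generators of the restricted quantum group. -/
inductive gen : Type | E | F | K | Kinv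

/-- The primitive `2p`-th root of unity `q = e^{iπ/p}`. -/
def q (p : ℕ) : ℂ := Complex.exp (Real.pi * Complex.I / p)

/-- The `q`-integer `[n] = (q^n - q^{-n})/(q - q^{-1})`. -/
def qi (p : ℕ) (n : ℤ) : ℂ := (q p ^ n - q p ^ (-n)) / (q p - (q p)⁻¹)

/-- The `q`-factorial `[m]!`. -/
def qfact (p m : ℕ) : ℂ := ∏ i ∈ Finset.range m, qi p (i + 1)

open FreeAlgebra in
/-- The defining relations of `Ū_q(sl₂)`. -/
inductive rel (p : ℕ) : FreeAlgebra ℂ gen → FreeAlgebra ℂ gen → Prop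
  | KKinv : rel p (ι ℂ gen.K * ι ℂ gen.Kinv) 1
  | KinvK : rel p (ι ℂ gen.Kinv * ι ℂ gen.K) 1
  | Ep : rel p (ι ℂ gen.E ^ p) 0
  | Fp : rel p (ι ℂ gen.F ^ p) 0
  | K2p : rel p (ι ℂ gen.K ^ (2 * p)) 1
  | KE : rel p (ι ℂ gen.K * ι ℂ gen.E) (q p ^ 2 • (ι ℂ gen.E * ι ℂ gen.K))
  | KF : rel p (ι ℂ gen.K * ι ℂ gen.F) ((q p ^ 2)⁻¹ • (ι ℂ gen.F * ι ℂ gen.K))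
  | EF : rel p (ι ℂ gen.E * ι ℂ gen.F - ι ℂ gen.F * ι ℂ gen.E)
             ((q p - (q p)⁻¹)⁻¹ • (ι ℂ gen.K - ι ℂ gen.Kinv))

/-- The restricted quantum group `Ū_q(sl₂)`, presented by generators and relations. -/
abbrev Uq (p : ℕ) := RingQuot (rel p)

def EE (p : ℕ) : Uq p := RingQuot.mkAlgHom ℂ (rel p) (FreeAlgebra.ι ℂ gen.E)
def FF (p : ℕ) : Uq p := RingQuot.mkAlgHom ℂ (rel p) (FreeAlgebra.ι ℂ gen.F)
def KK (p : ℕ) : Uq p := RingQuot.mkAlgHom ℂ (rel p) (FreeAlgebra.ι ℂ gen.K)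
def KKinv (p : ℕ) : Uq p := RingQuot.mkAlgHom ℂ (rel p) (FreeAlgebra.ι ℂ gen.Kinv)

/-! ### The simple modules `X^α(s)` as matrix representations -/

/-- Matrix of `K` on `X^α(s)` in the canonical basis. -/
def XK (p : ℕ) (α : ℂ) (s : ℕ) : Matrix (Fin s) (Fin s) ℂ :=
  Matrix.diagonal fun i => α * q p ^ ((s : ℤ) - 1 - 2 * (i : ℕ))

/-- Matrix of `E` on `X^α(s)` in the canonical basis. -/
def XE (p : ℕ) (α : ℂ) (s : ℕ) : Matrix (Fin s) (Fin s) ℂ :=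
  Matrix.of fun i j =>
    if (i : ℕ) + 1 = (j : ℕ) then α * qi p (j : ℕ) * qi p ((s : ℤ) - (j : ℕ)) else 0

/-- Matrix of `F` on `X^α(s)` in the canonical basis. -/
def XF (s : ℕ) : Matrix (Fin s) (Fin s) ℂ :=
  Matrix.of fun i j => if (i : ℕ) = (j : ℕ) + 1 then (1 : ℂ) else 0

/-- The statement that `ρX α s` is the representation on `X^α(s)` for the relevant
values of `α` and `s`. -/
def IsXRep (p : ℕ) (ρX : (α : ℂ) → (s : ℕ) → (Uq p →ₐ[ℂ] Matrix (Fin s) (Fin s) ℂ)) : Prop :=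
  ∀ α : ℂ, (α = 1 ∨ α = -1) → ∀ s : ℕ, 1 ≤ s → s ≤ p →
    ρX α s (KK p) = XK p α s ∧ ρX α s (EE p) = XE p α s ∧ ρX α s (FF p) = XF s

/-! ### The projective modules `P^α(s)` as matrix representations -/

/-- Index for the standard basis `(b_i, x_j, y_k, a_l)` of `P^α(s)`. -/
abbrev PIdx (p s : ℕ) := Fin s ⊕ (Fin (p - s) ⊕ (Fin (p - s) ⊕ Fin s))

/-- Diagonal of the matrix of `K` on `P^α(s)`. -/
def PKdiag (p : ℕ) (α : ℂ) (s : ℕ) : PIdx p s → ℂ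
  | .inl i => α * q p ^ ((s : ℤ) - 1 - 2 * (i : ℕ))
  | .inr (.inl j) => -α * q p ^ ((p : ℤ) - s - 1 - 2 * (j : ℕ))
  | .inr (.inr (.inl k)) => -α * q p ^ ((p : ℤ) - s - 1 - 2 * (k : ℕ))
  | .inr (.inr (.inr l)) => α * q p ^ ((s : ℤ) - 1 - 2 * (l : ℕ))

/-- Matrix of `K` on `P^α(s)` in the standard basis. -/
def PK (p : ℕ) (α : ℂ) (s : ℕ) : Matrix (PIdx p s) (PIdx p s) ℂ :=
  Matrix.diagonal (PKdiag p α s)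

/-- Matrix of `E` on `P^α(s)` in the standard basis. -/
def PE (p : ℕ) (α : ℂ) (s : ℕ) : Matrix (PIdx p s) (PIdx p s) ℂ :=
  Matrix.of fun i j =>
    match i, j with
    | .inl i, .inl j =>
        if (i : ℕ) + 1 = (j : ℕ) then α * qi p (j : ℕ) * qi p ((s : ℤ) - (j : ℕ)) else 0
    | .inr (.inl jx), .inl j => if (j : ℕ) = 0 ∧ (jx : ℕ) + 1 = p - s then 1 else 0
    | .inr (.inr (.inr l)), .inl j => if (l : ℕ) + 1 = (j : ℕ) then 1 else 0
    | .inr (.inl i), .inr (.inl j) =>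
        if (i : ℕ) + 1 = (j : ℕ) then -α * qi p (j : ℕ) * qi p ((p : ℤ) - s - (j : ℕ)) else 0
    | .inr (.inr (.inl i)), .inr (.inr (.inl k)) =>
        if (i : ℕ) + 1 = (k : ℕ) then -α * qi p (k : ℕ) * qi p ((p : ℤ) - s - (k : ℕ)) else 0
    | .inr (.inr (.inr l)), .inr (.inr (.inl k)) =>
        if (k : ℕ) = 0 ∧ (l : ℕ) + 1 = s then 1 else 0
    | .inr (.inr (.inr i)), .inr (.inr (.inr l)) =>
        if (i : ℕ) + 1 = (l : ℕ) then α * qi p (l : ℕ) * qi p ((s : ℤ) - (l : ℕ)) else 0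
    | _, _ => 0

/-- Matrix of `F` on `P^α(s)` in the standard basis. -/
def PF (p s : ℕ) : Matrix (PIdx p s) (PIdx p s) ℂ :=
  Matrix.of fun i j =>
    match i, j with
    | .inl i, .inl j => if (i : ℕ) = (j : ℕ) + 1 then (1 : ℂ) else 0
    | .inr (.inr (.inl k)), .inl j => if (j : ℕ) + 1 = s ∧ (k : ℕ) = 0 then 1 else 0
    | .inr (.inl i), .inr (.inl j) => if (i : ℕ) = (j : ℕ) + 1 then 1 else 0
    | .inr (.inr (.inr l)), .inr (.inl j) => if (j : ℕ) + 1 = p - s ∧ (l : ℕ) = 0 then 1 else 0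
    | .inr (.inr (.inl i)), .inr (.inr (.inl k)) => if (i : ℕ) = (k : ℕ) + 1 then 1 else 0
    | .inr (.inr (.inr i)), .inr (.inr (.inr l)) => if (i : ℕ) = (l : ℕ) + 1 then 1 else 0
    | _, _ => 0

/-- The statement that `ρP α s` is the representation on `P^α(s)` for the relevant
values of `α` and `s`. -/
def IsPRep (p : ℕ)
    (ρP : (α : ℂ) → (s : ℕ) → (Uq p →ₐ[ℂ] Matrix (PIdx p s) (PIdx p s) ℂ)) : Prop :=
  ∀ α : ℂ, (α = 1 ∨ α = -1) → ∀ s : ℕ, 1 ≤ s → s ≤ p - 1 →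
    ρP α s (KK p) = PK p α s ∧ ρP α s (EE p) = PE p α s ∧ ρP α s (FF p) = PF p s

/-! ### Symmetric linear forms, characters, and the forms `G_s` -/

/-- Symmetric linear forms. -/
def IsSLF (p : ℕ) (φ : Uq p →ₗ[ℂ] ℂ) : Prop := ∀ x y : Uq p, φ (x * y) = φ (y * x)

/-- The character of a matrix representation. -/
def chiOf (p : ℕ) {n : Type} [Fintype n] [DecidableEq n]
    (ρ : Uq p →ₐ[ℂ] Matrix n n ℂ) : Uq p →ₗ[ℂ] ℂ :=
  (Matrix.traceLinearMap n ℂ ℂ).comp ρ.toLinearMap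

/-- The matrix entry functional. -/
def entry {n : Type} (i j : n) : Matrix n n ℂ →ₗ[ℂ] ℂ where
  toFun M := M i j
  map_add' _ _ := rfl
  map_smul' _ _ := rfl

/-- The symmetric linear form `G_s = tr H^+_s + tr H^-_{p-s}`. -/
def GOf (p : ℕ)
    (ρP : (α : ℂ) → (s : ℕ) → (Uq p →ₐ[ℂ] Matrix (PIdx p s) (PIdx p s) ℂ))
    (s : ℕ) : Uq p →ₗ[ℂ] ℂ :=
  (∑ i : Fin s,
    (entry (Sum.inr (Sum.inr (Sum.inr i))) (Sum.inl i)).comp (ρP 1 s).toLinearMap) +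
  (∑ j : Fin (p - s),
    (entry (Sum.inr (Sum.inr (Sum.inr j))) (Sum.inl j)).comp (ρP (-1) (p - s)).toLinearMap)

/-! ### Convolution product -/

/-- The convolution product of two linear forms, with respect to a comultiplication `Δ`. -/
def conv (p : ℕ) (Δ : Uq p →ₐ[ℂ] (Uq p ⊗[ℂ] Uq p)) (φ ψ : Uq p →ₗ[ℂ] ℂ) :
    Uq p →ₗ[ℂ] ℂ :=
  (LinearMap.mul' ℂ ℂ).comp ((TensorProduct.map φ ψ).comp Δ.toLinearMap)

/-- The statement that `Δ` is the comultiplication of `Ū_q(sl₂)`. -/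
def IsCoprod (p : ℕ) (Δ : Uq p →ₐ[ℂ] (Uq p ⊗[ℂ] Uq p)) : Prop :=
  Δ (EE p) = 1 ⊗ₜ[ℂ] EE p + EE p ⊗ₜ[ℂ] KK p ∧
  Δ (FF p) = FF p ⊗ₜ[ℂ] 1 + KKinv p ⊗ₜ[ℂ] FF p ∧
  Δ (KK p) = KK p ⊗ₜ[ℂ] KK p ∧
  Δ (KKinv p) = KKinv p ⊗ₜ[ℂ] KKinv p


/-- The Casimir element `C = FE + (qK + q⁻¹K⁻¹)/(q - q⁻¹)²`. -/
def Casimir (p : ℕ) : Uq p :=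
  FF p * EE p + ((q p - (q p)⁻¹) ^ 2)⁻¹ • (q p • KK p + (q p)⁻¹ • KKinv p)

/-- `c_s = (q^s + q^{-s})/(q - q^{-1})²`. -/
def cas (p s : ℕ) : ℂ := (q p ^ (s : ℤ) + q p ^ (-(s : ℤ))) / (q p - (q p)⁻¹) ^ 2

lemma q_ne (p : ℕ) : q p ≠ 0 := Complex.exp_ne_zero _

lemma q_pow_p (p : ℕ) (hp : 2 ≤ p) : q p ^ (p : ℤ) = -1 := by
  have : (p : ℂ) ≠ 0 := by exact_mod_cast (by omega : p ≠ 0)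
  rw [zpow_natCast, q, ← Complex.exp_nat_mul, mul_div_cancel₀ _ this, Complex.exp_pi_mul_I]

lemma cas_sub (p s : ℕ) (hp : 2 ≤ p) (hs : s ≤ p) : -cas p (p - s) = cas p s := by
  have h := q_pow_p p hp
  unfold cas
  rw [Nat.cast_sub hs, neg_sub, zpow_sub₀ (q_ne p), zpow_sub₀ (q_ne p), h, zpow_neg]
  ring

lemma qi_mul (p : ℕ) (α : ℂ) (s i : ℤ) :
    α * qi p i * qi p (s - i) + ((q p - (q p)⁻¹) ^ 2)⁻¹ *
      (q p * (α * q p ^ (s - 1 - 2 * i)) + (q p)⁻¹ * (α * q p ^ (-(s - 1 - 2 * i)))) =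
    α * ((q p ^ s + q p ^ (-s)) / (q p - (q p)⁻¹) ^ 2) := by
  have h0 := q_ne p
  have e1 : q p ^ (s - 1 - 2 * i) = q p ^ s * (q p)⁻¹ * (q p ^ i)⁻¹ * (q p ^ i)⁻¹ := by
    rw [show s - 1 - 2 * i = s + (-1) + (-i) + (-i) by ring]
    simp [zpow_add₀ h0]
  have e2 : q p ^ (-(s - 1 - 2 * i)) = (q p ^ s)⁻¹ * (q p) * (q p ^ i) * (q p ^ i) := by
    rw [show -(s - 1 - 2 * i) = -s + 1 + i + i by ring]
    simp [zpow_add₀ h0]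
  have e3 : q p ^ (s - i) = q p ^ s * (q p ^ i)⁻¹ := by
    rw [sub_eq_add_neg, zpow_add₀ h0, zpow_neg]
  have e4 : q p ^ (-(s - i)) = (q p ^ s)⁻¹ * q p ^ i := by
    rw [show -(s - i) = -s + i by ring, zpow_add₀ h0, zpow_neg]
  unfold qi
  rw [e1, e2, e3, e4, zpow_neg, zpow_neg]
  have hi : q p ^ i ≠ 0 := zpow_ne_zero _ h0
  have hs : q p ^ s ≠ 0 := zpow_ne_zero _ h0
  generalize hd : (q p - (q p)⁻¹) = d
  generalize q p ^ i = x at *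
  generalize q p ^ s = y at *
  generalize q p = r at *
  rcases eq_or_ne d 0 with h | h
  · simp [h]
  · field_simp
    ring

lemma KK_mul (p : ℕ) : KK p * KKinv p = 1 := by
  have := RingQuot.mkAlgHom_rel ℂ (rel.KKinv (p := p))
  simpa [KK, KKinv] using this

lemma KinvK_mul (p : ℕ) : KKinv p * KK p = 1 := by
  have := RingQuot.mkAlgHom_rel ℂ (rel.KinvK (p := p))
  simpa [KK, KKinv] using this

lemma map_KKinv {p : ℕ} {n : Type} [Fintype n] [DecidableEq n]
    (ρ : Uq p →ₐ[ℂ] Matrix n n ℂ) (d e : n → ℂ) (h : ρ (KK p) = Matrix.diagonal d)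
    (hde : ∀ i, d i * e i = 1) : ρ (KKinv p) = Matrix.diagonal e := by
  have h1 : ρ (KKinv p) * Matrix.diagonal d = 1 := by
    rw [← h, ← map_mul, KinvK_mul, map_one]
  refine left_inv_eq_right_inv h1 ?_
  rw [Matrix.diagonal_mul_diagonal]
  simp [hde]

lemma alpha_inv (p : ℕ) (α : ℂ) (hα : α = 1 ∨ α = -1) (n : ℤ) :
    α * q p ^ n * (α * q p ^ (-n)) = 1 := by
  have h0 : q p ^ n ≠ 0 := zpow_ne_zero _ (q_ne p)
  rcases hα with rfl | rfl <;> rw [zpow_neg] <;> field_simp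

lemma map_Casimir {p : ℕ} {n : Type} [Fintype n] [DecidableEq n]
    (ρ : Uq p →ₐ[ℂ] Matrix n n ℂ) (d e : n → ℂ) (h : ρ (KK p) = Matrix.diagonal d)
    (hde : ∀ i, d i * e i = 1) : ρ (Casimir p) = ρ (FF p) * ρ (EE p) +
      Matrix.diagonal fun i => ((q p - (q p)⁻¹) ^ 2)⁻¹ * (q p * d i + (q p)⁻¹ * e i) := by
  rw [Casimir, map_add, map_mul, map_smul, map_add, map_smul, map_smul, h,
    map_KKinv ρ d e h hde]
  congr 1
  ext i j
  by_cases hij : i = j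
  · subst hij; simp
  · simp [hij]

lemma XF_mul (s : ℕ) (M : Matrix (Fin s) (Fin s) ℂ) (i c : Fin s) :
    (XF s * M) i c = if (i : ℕ) = 0 then 0 else M ⟨(i : ℕ) - 1, by omega⟩ c := by
  rw [Matrix.mul_apply]
  split_ifs with h
  · apply Finset.sum_eq_zero
    intro j _
    simp [XF, h]
  · rw [Finset.sum_eq_single ⟨(i : ℕ) - 1, by omega⟩]
    · simp only [XF, Matrix.of_apply]
      rw [if_pos (by omega), one_mul]
    · intro j _ hj
      simp only [XF, Matrix.of_apply]
      rw [if_neg, zero_mul]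
      intro h'
      apply hj
      ext
      simp only
      omega
    · simp

lemma X_Casimir {p : ℕ} {α : ℂ} (hα : α = 1 ∨ α = -1) {s : ℕ}
    (ρ : Uq p →ₐ[ℂ] Matrix (Fin s) (Fin s) ℂ)
    (h : ρ (KK p) = XK p α s ∧ ρ (EE p) = XE p α s ∧ ρ (FF p) = XF s) :
    ρ (Casimir p) = (α * cas p s) • (1 : Matrix (Fin s) (Fin s) ℂ) := by
  obtain ⟨hK, hE, hF⟩ := h
  rw [map_Casimir ρ _ (fun i => α * q p ^ (-((s : ℤ) - 1 - 2 * (i : ℕ)))) hK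
    (fun i => alpha_inv p α hα _), hE, hF]
  ext i j
  rw [Matrix.add_apply, XF_mul]
  have key := qi_mul p α s (i : ℕ)
  by_cases hij : i = j
  · subst hij
    rw [Matrix.diagonal_apply_eq, Matrix.smul_apply, Matrix.one_apply_eq, smul_eq_mul, mul_one,
      cas, ← key]
    congr 1
    split_ifs with h
    · simp [h, qi]
    · simp only [XE, Matrix.of_apply]
      rw [if_pos (by omega)]
  · rw [Matrix.diagonal_apply_ne _ hij, Matrix.smul_apply, Matrix.one_apply_ne hij, smul_zero,
      add_zero]
    split_ifs with h
    · rfl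
    · simp only [XE, Matrix.of_apply]
      rw [if_neg]
      intro h'
      apply hij
      ext
      omega

lemma PF_mul (p s : ℕ) (hs : s < p) (M : Matrix (PIdx p s) (PIdx p s) ℂ) (i : Fin s)
    (c : PIdx p s) :
    (PF p s * M) (.inr (.inr (.inr i))) c =
      if (i : ℕ) = 0 then M (.inr (.inl ⟨p - s - 1, by omega⟩)) c
      else M (.inr (.inr (.inr ⟨(i : ℕ) - 1, by omega⟩))) c := by
  rw [Matrix.mul_apply]
  split_ifs with h
  · rw [Finset.sum_eq_single (.inr (.inl ⟨p - s - 1, by omega⟩))]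
    · simp only [PF, Matrix.of_apply]
      rw [if_pos (by omega), one_mul]
    · rintro (j | j | j | j) _ hj
      · simp [PF]
      · simp only [PF, Matrix.of_apply]
        rw [if_neg, zero_mul]
        intro h'
        apply hj
        congr
        simp only [Fin.ext_iff]
        omega
      · simp [PF]
      · simp [PF, h]
    · simp
  · rw [Finset.sum_eq_single (.inr (.inr (.inr ⟨(i : ℕ) - 1, by omega⟩)))]
    · simp only [PF, Matrix.of_apply]
      rw [if_pos (by omega), one_mul]
    · rintro (j | j | j | j) _ hj
      · simp [PF]
      · simp [PF, h]
      · simp [PF]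
      · simp only [PF, Matrix.of_apply]
        rw [if_neg, zero_mul]
        intro h'
        apply hj
        congr
        simp only [Fin.ext_iff]
        omega
    · simp

/-- The inverse diagonal of `K` on `P^α(s)`. -/
def PKdiagInv (p : ℕ) (α : ℂ) (s : ℕ) : PIdx p s → ℂ
  | .inl i => α * q p ^ (-((s : ℤ) - 1 - 2 * (i : ℕ)))
  | .inr (.inl j) => -α * q p ^ (-((p : ℤ) - s - 1 - 2 * (j : ℕ)))
  | .inr (.inr (.inl k)) => -α * q p ^ (-((p : ℤ) - s - 1 - 2 * (k : ℕ)))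
  | .inr (.inr (.inr l)) => α * q p ^ (-((s : ℤ) - 1 - 2 * (l : ℕ)))

/-- The rows of the Casimir matrix on `P^α(s)` indexed by the `a_i`. -/
lemma P_Casimir {p : ℕ} {α : ℂ} (hα : α = 1 ∨ α = -1) {s : ℕ} (hs : s < p)
    (ρ : Uq p →ₐ[ℂ] Matrix (PIdx p s) (PIdx p s) ℂ)
    (h : ρ (KK p) = PK p α s ∧ ρ (EE p) = PE p α s ∧ ρ (FF p) = PF p s)
    (i : Fin s) (c : PIdx p s) :
    ρ (Casimir p) (.inr (.inr (.inr i))) c =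
      (if c = .inr (.inr (.inr i)) then α * cas p s else 0) + (if c = .inl i then 1 else 0) := by
  obtain ⟨hK, hE, hF⟩ := h
  have hα' : -α = 1 ∨ -α = -1 := by
    rcases hα with rfl | rfl <;> simp
  rw [map_Casimir ρ (PKdiag p α s) (PKdiagInv p α s) hK, hE, hF]
  swap
  · rintro (j | j | j | j)
    · exact alpha_inv p α hα _
    · exact alpha_inv p (-α) hα' _
    · exact alpha_inv p (-α) hα' _
    · exact alpha_inv p α hα _
  rw [Matrix.add_apply, PF_mul p s hs]
  have key := qi_mul p α s (i : ℕ)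
  rcases c with j | j | j | j
  · rw [Matrix.diagonal_apply_ne _ (by simp)]
    simp only [reduceCtorEq, Sum.inr.injEq, if_false, add_zero, zero_add]
    simp only [PE, Matrix.of_apply, Sum.inl.injEq, Fin.ext_iff]
    split_ifs <;> first | rfl | omega
  · rw [Matrix.diagonal_apply_ne _ (by simp)]
    simp only [reduceCtorEq, Sum.inr.injEq, if_false, add_zero, zero_add]
    simp only [PE, Matrix.of_apply]
    split_ifs <;> first | rfl | omega
  · rw [Matrix.diagonal_apply_ne _ (by simp)]
    simp only [reduceCtorEq, Sum.inr.injEq, if_false, add_zero, zero_add]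
    simp only [PE, Matrix.of_apply]
    split_ifs <;> first | rfl | omega
  · by_cases hij : i = j
    · subst hij
      rw [Matrix.diagonal_apply_eq]
      simp only [reduceCtorEq, Sum.inr.injEq, if_true, if_false, add_zero, zero_add]
      rw [cas, ← key]
      simp only [PKdiag, PKdiagInv]
      congr 1
      split_ifs with h
      · simp [h, qi, PE]
      · simp only [PE, Matrix.of_apply]
        rw [if_pos (by omega)]
    · rw [Matrix.diagonal_apply_ne _ (by simpa using hij)]
      simp only [reduceCtorEq, Sum.inr.injEq, Ne.symm hij, if_false, add_zero, zero_add]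
      rw [Fin.ext_iff] at hij
      simp only [PE, Matrix.of_apply]
      split_ifs <;> first | rfl | omega

/-- The projection `P^α(s) → X^α(s)`. -/
def Pr (p s : ℕ) : Matrix (Fin s) (PIdx p s) ℂ :=
  Matrix.of fun i c => if c = .inl i then 1 else 0

lemma Pr_mul (p s : ℕ) (M : Matrix (PIdx p s) (PIdx p s) ℂ) (i : Fin s) (c : PIdx p s) :
    (Pr p s * M) i c = M (.inl i) c := by
  simp [Pr, Matrix.mul_apply]

lemma mul_Pr_inl (p s : ℕ) (M : Matrix (Fin s) (Fin s) ℂ) (i j : Fin s) :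
    (M * Pr p s) i (.inl j) = M i j := by
  simp [Pr, Matrix.mul_apply]

lemma mul_Pr_inr (p s : ℕ) (M : Matrix (Fin s) (Fin s) ℂ) (i : Fin s) (c) :
    (M * Pr p s) i (.inr c) = 0 := by
  simp [Pr, Matrix.mul_apply]

lemma Uq_induction {p : ℕ} (S : Subalgebra ℂ (Uq p)) (hE : EE p ∈ S) (hF : FF p ∈ S)
    (hK : KK p ∈ S) (hKi : KKinv p ∈ S) (x : Uq p) : x ∈ S := by
  obtain ⟨y, rfl⟩ := RingQuot.mkAlgHom_surjective ℂ (rel p) x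
  induction y using FreeAlgebra.induction with
  | grade0 r => rw [AlgHom.commutes]; exact S.algebraMap_mem r
  | grade1 g => cases g <;> assumption
  | mul a b ha hb => rw [map_mul]; exact S.mul_mem ha hb
  | add a b ha hb => rw [map_add]; exact S.add_mem ha hb

/-- Elements of `Uq` whose actions are intertwined by a matrix. -/
def intertwined {p : ℕ} {m n : Type} [Fintype m] [DecidableEq m] [Fintype n] [DecidableEq n]
    (ρ : Uq p →ₐ[ℂ] Matrix n n ℂ) (σ : Uq p →ₐ[ℂ] Matrix m m ℂ) (Q : Matrix m n ℂ) :
    Subalgebra ℂ (Uq p) where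
  carrier := {x | Q * ρ x = σ x * Q}
  mul_mem' := by
    intro a b ha hb
    simp only [Set.mem_ofPred_eq, map_mul] at *
    rw [← Matrix.mul_assoc, ha, Matrix.mul_assoc, hb, Matrix.mul_assoc]
  add_mem' := by
    intro a b ha hb
    simp only [Set.mem_ofPred_eq, map_add] at *
    rw [Matrix.mul_add, ha, hb, Matrix.add_mul]
  algebraMap_mem' := by
    intro r
    simp only [Set.mem_ofPred_eq, Algebra.algebraMap_eq_smul_one, map_smul, map_one]
    simp

lemma P_block {p : ℕ} {α : ℂ} {s : ℕ}
    (σ : Uq p →ₐ[ℂ] Matrix (Fin s) (Fin s) ℂ)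
    (h' : σ (KK p) = XK p α s ∧ σ (EE p) = XE p α s ∧ σ (FF p) = XF s)
    (ρ : Uq p →ₐ[ℂ] Matrix (PIdx p s) (PIdx p s) ℂ)
    (h : ρ (KK p) = PK p α s ∧ ρ (EE p) = PE p α s ∧ ρ (FF p) = PF p s)
    (x : Uq p) (i j : Fin s) : ρ x (.inl i) (.inl j) = σ x i j := by
  obtain ⟨hK, hE, hF⟩ := h
  obtain ⟨hK', hE', hF'⟩ := h'
  have hKm : Pr p s * ρ (KK p) = σ (KK p) * Pr p s := by
    rw [hK, hK']
    ext a c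
    rw [Pr_mul]
    rcases c with b | c
    · rw [mul_Pr_inl]
      simp [PK, XK, Matrix.diagonal_apply, PKdiag]
    · rw [mul_Pr_inr]
      simp [PK]
  have hx : x ∈ intertwined ρ σ (Pr p s) := by
    apply Uq_induction
    · change Pr p s * ρ (EE p) = σ (EE p) * Pr p s
      rw [hE, hE']
      ext a c
      rw [Pr_mul]
      rcases c with b | c
      · rw [mul_Pr_inl]
        rfl
      · rw [mul_Pr_inr]
        rcases c with c | c | c <;> rfl
    · change Pr p s * ρ (FF p) = σ (FF p) * Pr p s
      rw [hF, hF']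
      ext a c
      rw [Pr_mul]
      rcases c with b | c
      · rw [mul_Pr_inl]
        rfl
      · rw [mul_Pr_inr]
        rcases c with c | c | c <;> rfl
    · exact hKm
    · change Pr p s * ρ (KKinv p) = σ (KKinv p) * Pr p s
      have e1 : ρ (KK p) * ρ (KKinv p) = 1 := by rw [← map_mul, KK_mul, map_one]
      have e2 : σ (KKinv p) * σ (KK p) = 1 := by rw [← map_mul, KinvK_mul, map_one]
      calc Pr p s * ρ (KKinv p)
          = σ (KKinv p) * (σ (KK p) * Pr p s) * ρ (KKinv p) := by
            rw [← Matrix.mul_assoc, e2, Matrix.one_mul]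
        _ = σ (KKinv p) * Pr p s := by
            rw [← hKm, Matrix.mul_assoc, Matrix.mul_assoc, e1, Matrix.mul_one]
  have hx' : Pr p s * ρ x = σ x * Pr p s := hx
  rw [← Pr_mul p s (ρ x) i (.inl j), hx', mul_Pr_inl]

lemma P_Casimir_mul {p : ℕ} {α : ℂ} (hα : α = 1 ∨ α = -1) {s : ℕ} (hs : s < p)
    (σ : Uq p →ₐ[ℂ] Matrix (Fin s) (Fin s) ℂ)
    (h' : σ (KK p) = XK p α s ∧ σ (EE p) = XE p α s ∧ σ (FF p) = XF s)
    (ρ : Uq p →ₐ[ℂ] Matrix (PIdx p s) (PIdx p s) ℂ)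
    (h : ρ (KK p) = PK p α s ∧ ρ (EE p) = PE p α s ∧ ρ (FF p) = PF p s)
    (x : Uq p) (i : Fin s) :
    ρ (Casimir p * x) (.inr (.inr (.inr i))) (.inl i) =
      α * cas p s * ρ x (.inr (.inr (.inr i))) (.inl i) + σ x i i := by
  rw [map_mul, Matrix.mul_apply]
  simp only [P_Casimir hα hs ρ h, add_mul, Finset.sum_add_distrib, ite_mul, zero_mul, one_mul,
    Finset.sum_ite_eq', Finset.mem_univ, if_true]
  rw [P_block σ h' ρ h]

lemma GOf_apply (p : ℕ)
    (ρP : (α : ℂ) → (s : ℕ) → (Uq p →ₐ[ℂ] Matrix (PIdx p s) (PIdx p s) ℂ))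
    (s : ℕ) (x : Uq p) : GOf p ρP s x =
    (∑ i : Fin s, ρP 1 s x (.inr (.inr (.inr i))) (.inl i)) +
    ∑ j : Fin (p - s), ρP (-1) (p - s) x (.inr (.inr (.inr j))) (.inl j) := by
  simp only [GOf, LinearMap.add_apply, LinearMap.sum_apply]
  rfl

lemma chiOf_apply (p : ℕ) {n : Type} [Fintype n] [DecidableEq n]
    (ρ : Uq p →ₐ[ℂ] Matrix n n ℂ) (x : Uq p) : chiOf p ρ x = ∑ i, ρ x i i := rfl

/-- `χ^α_s(Cx) = α c_s χ^α_s(x)`,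
`G_s(Cx) = c_s G_s(x) + (χ^+_s + χ^-_{p-s})(x)`, and `G_s(C^n) = n p c_s^{n-1}`. -/
theorem statement_18 (p : ℕ) (hp : 2 ≤ p)
    (ρX : (α : ℂ) → (s : ℕ) → (Uq p →ₐ[ℂ] Matrix (Fin s) (Fin s) ℂ))
    (hX : IsXRep p ρX)
    (ρP : (α : ℂ) → (s : ℕ) → (Uq p →ₐ[ℂ] Matrix (PIdx p s) (PIdx p s) ℂ))
    (hP : IsPRep p ρP) :
    (∀ (α : ℂ), (α = 1 ∨ α = -1) → ∀ s : ℕ, 1 ≤ s → s ≤ p - 1 → ∀ x : Uq p,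
      chiOf p (ρX α s) (Casimir p * x) = α * cas p s * chiOf p (ρX α s) x)
    ∧ (∀ s : ℕ, 1 ≤ s → s ≤ p - 1 → ∀ x : Uq p,
        GOf p ρP s (Casimir p * x) =
          cas p s * GOf p ρP s x + (chiOf p (ρX 1 s) + chiOf p (ρX (-1) (p - s))) x)
    ∧ (∀ s : ℕ, 1 ≤ s → s ≤ p - 1 → ∀ n : ℕ, 1 ≤ n →
        GOf p ρP s (Casimir p ^ n) = (n : ℂ) * (p : ℂ) * cas p s ^ (n - 1)) := by
  have part1 : ∀ (α : ℂ), (α = 1 ∨ α = -1) → ∀ s : ℕ, 1 ≤ s → s ≤ p - 1 → ∀ x : Uq p,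
      chiOf p (ρX α s) (Casimir p * x) = α * cas p s * chiOf p (ρX α s) x := by
    intro α hα s h1 h2 x
    rw [chiOf_apply, chiOf_apply, map_mul,
      X_Casimir hα (ρX α s) (hX α hα s h1 (by omega)), Finset.mul_sum]
    simp
  have part2 : ∀ s : ℕ, 1 ≤ s → s ≤ p - 1 → ∀ x : Uq p,
        GOf p ρP s (Casimir p * x) =
          cas p s * GOf p ρP s x + (chiOf p (ρX 1 s) + chiOf p (ρX (-1) (p - s))) x := by
    intro s h1 h2 x
    have a1 := P_Casimir_mul (Or.inl rfl) (by omega) (ρX 1 s)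
      (hX 1 (Or.inl rfl) s h1 (by omega)) (ρP 1 s) (hP 1 (Or.inl rfl) s h1 h2) x
    have a2 := P_Casimir_mul (Or.inr rfl) (by omega) (ρX (-1) (p - s))
      (hX (-1) (Or.inr rfl) (p - s) (by omega) (by omega)) (ρP (-1) (p - s))
      (hP (-1) (Or.inr rfl) (p - s) (by omega) (by omega)) x
    rw [GOf_apply, GOf_apply, LinearMap.add_apply, chiOf_apply, chiOf_apply]
    simp only [a1, a2, Finset.sum_add_distrib, ← Finset.mul_sum]
    rw [neg_one_mul, cas_sub p s hp (by omega)]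
    ring
  refine ⟨part1, part2, ?_⟩
  intro s h1 h2 n hn
  have chi : ∀ (α : ℂ), (α = 1 ∨ α = -1) → ∀ s : ℕ, 1 ≤ s → s ≤ p - 1 → ∀ n : ℕ,
      chiOf p (ρX α s) (Casimir p ^ n) = (α * cas p s) ^ n * s := by
    intro α hα s h1 h2 n
    induction n with
    | zero => simp [chiOf_apply]
    | succ n ih => rw [pow_succ', part1 α hα s h1 h2, ih]; ring
  obtain ⟨m, rfl⟩ : ∃ m, n = m + 1 := ⟨n - 1, by omega⟩
  have step : ∀ m : ℕ, GOf p ρP s (Casimir p ^ (m + 1)) =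
      cas p s * GOf p ρP s (Casimir p ^ m) + p * cas p s ^ m := by
    intro m
    rw [pow_succ', part2 s h1 h2, LinearMap.add_apply, chi 1 (Or.inl rfl) s h1 h2,
      chi (-1) (Or.inr rfl) (p - s) (by omega) (by omega), neg_one_mul,
      cas_sub p s hp (by omega), Nat.cast_sub (by omega)]
    ring
  clear hn
  rw [Nat.add_sub_cancel]
  induction m with
  | zero =>
    rw [step 0, pow_zero, GOf_apply]
    simp
  | succ m ih =>
    rw [step (m + 1), ih]
    push_cast
    ring

end Uqsl2
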